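/- arXiv:math/0504504 — 2 statements merged into one kernel-verified Lean document; each statement's English description precedes it below -/
import Mathlib

section
/- For every positive integer m, the second group cohomology H²(A₅, ℤ/m) of the alternating group A₅ with coefficients in the cyclic group ℤ/m endowed with the trivial action is isomorphic, as an abelian group, to ℤ/gcd(m,2). -/
/-- Normal forms for the quotient `⟨x, r ∣ x² = r⁵ = (r * x)³ = 1⟩` of the triangle group. -/
def IsIcosahedralWord {E : Type*} [Group E] (x r e : E) : Prop :=
  ∃ k j : ℕ, e = r ^ k ∨ e = r ^ k * (x * r ^ j) ∨ e = r ^ k * (x * r ^ 2 * x * r ^ j) ∨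
    e = r ^ k * (x * r ^ 2 * x * r ^ 3 * x)

namespace IsIcosahedralWord

variable {E : Type*} [Group E] {x r e : E}

theorem pow_mul (he : IsIcosahedralWord x r e) (n : ℕ) : IsIcosahedralWord x r (r ^ n * e) := by
  obtain ⟨k, j, h⟩ := he
  refine ⟨n + k, j, ?_⟩
  simpa only [pow_add, mul_assoc, mul_right_inj] using h

theorem conj_relations (hx : x * x = 1) (hr : r ^ 5 = 1)
    (hrx : r * x * (r * x) * (r * x) = 1) :
    x * r * x = r ^ 4 * x * r ^ 4 ∧ x * r ^ 4 * x = r * x * r ∧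
    x * r ^ 3 * x = r * x * r ^ 2 * x * r ∧
    x * r ^ 2 * x * r ^ 2 * x = r ^ 4 * x * r ^ 2 * x * r ^ 4 ∧
    x * r ^ 2 * x * r ^ 3 * x * r = r ^ 4 * (x * r ^ 2 * x * r ^ 3 * x) := by
  have hr4 : r ^ 4 = r⁻¹ := eq_inv_of_mul_eq_one_left (by rw [← pow_succ, hr])
  have hr3 : r ^ 3 = r⁻¹ * r⁻¹ := by
    rw [← hr4, ← pow_add, show 4 + 4 = 5 + 3 from rfl, pow_add, hr, one_mul]
  have hx' (w : E) : x * (x * w) = w := by rw [← mul_assoc, hx, one_mul]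
  have h1 (w : E) : x * (r * (x * w)) = r⁻¹ * (x * (r⁻¹ * w)) := by
    have : r * (x * (r * (x * (r * (x * (x * (r⁻¹ * w))))))) = x * (r⁻¹ * w) := by
      simpa only [mul_assoc, one_mul] using congrArg (· * (x * (r⁻¹ * w))) hrx
    rw [hx', mul_inv_cancel_left] at this
    rw [eq_inv_mul_iff_mul_eq, this]
  have h4 (w : E) : x * (r⁻¹ * (x * w)) = r * (x * (r * w)) := by
    have := congrArg (x * ·) (h1 (r * w))
    rw [hx', inv_mul_cancel_left] at this
    exact this.symm
  have h3 (w : E) : x * (r⁻¹ * (r⁻¹ * (x * w))) = r * (x * (r * (r * (x * (r * w))))) := by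
    have := h4 (x * (r⁻¹ * (x * w)))
    rwa [hx', h4] at this
  have hr' (w : E) : r⁻¹ * (r⁻¹ * (r⁻¹ * w)) = r * (r * w) := by
    rw [← mul_assoc r⁻¹ r⁻¹, ← hr3, ← hr4, ← mul_assoc, ← pow_add,
      show 3 + 4 = 5 + 2 from rfl, pow_add, hr, one_mul, pow_two, mul_assoc]
  have hr'' (w : E) : r * (r * (r * w)) = r⁻¹ * (r⁻¹ * w) := by
    rw [← hr', inv_mul_cancel_left]
  have h22 (w : E) : x * (r * (r * (x * w))) = r⁻¹ * (x * (r⁻¹ * (r⁻¹ * (x * (r⁻¹ * w))))) := by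
    rw [h3, mul_inv_cancel_left, inv_mul_cancel_left]
  have hN : x * (r * (r * (x * (r⁻¹ * (r⁻¹ * x))))) =
      r * (x * (r * (r * (x * (r⁻¹ * (r⁻¹ * (x * r))))))) := by
    have h := h3 1
    rw [mul_one, mul_one] at h
    rw [h, hr'', h3, hr'']
  simp only [hr4, hr3, pow_two, mul_assoc]
  refine ⟨?_, ?_, ?_, ?_, ?_⟩
  · simpa using h1 1
  · simpa using h4 1
  · simpa using h3 1
  · have := h22 (r * (r * (x * 1)))
    rwa [inv_mul_cancel_left, h1, hr', mul_one, mul_one] at this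
  · rw [eq_inv_mul_iff_mul_eq, ← hN]

theorem mul_right (he : IsIcosahedralWord x r e)
    (hN : x * r ^ 2 * x * r ^ 3 * x * r = r ^ 4 * (x * r ^ 2 * x * r ^ 3 * x)) :
    IsIcosahedralWord x r (e * r) := by
  obtain ⟨k, j, rfl | rfl | rfl | rfl⟩ := he
  · exact ⟨k + 1, 0, .inl (pow_succ r k).symm⟩
  · exact ⟨k, j + 1, .inr (.inl (by simp only [pow_succ, mul_assoc]))⟩
  · exact ⟨k, j + 1, .inr (.inr (.inl (by simp only [pow_succ, mul_assoc])))⟩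
  · exact ⟨k + 4, 0, .inr (.inr (.inr (by rw [mul_assoc, hN, ← mul_assoc, pow_add])))⟩

theorem mul_involution (hx : x * x = 1) (hr : r ^ 5 = 1)
    (hrx : r * x * (r * x) * (r * x) = 1) (he : IsIcosahedralWord x r e) :
    IsIcosahedralWord x r (e * x) := by
  obtain ⟨h1, h4, h3, h22, -⟩ := conj_relations hx hr hrx
  obtain ⟨k, j, h⟩ := he
  have hj : r ^ j = r ^ (j % 5) := by rw [← Nat.div_add_mod j 5]; simp [pow_add, _root_.pow_mul, hr]
  have hj5 : j % 5 < 5 := Nat.mod_lt _ (by norm_num)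
  rw [hj] at h
  generalize j % 5 = i at h hj5
  rcases h with rfl | rfl | rfl | rfl
  · exact ⟨k, 0, .inr (.inl (by simp))⟩
  all_goals rw [mul_assoc]; apply pow_mul
  · interval_cases i
    · exact ⟨0, 0, .inl (by simp [hx])⟩
    · exact ⟨4, 4, .inr (.inl (by rw [pow_one, h1, mul_assoc]))⟩
    · exact ⟨0, 0, .inr (.inr (.inl (by simp)))⟩
    · exact ⟨1, 1, .inr (.inr (.inl (by rw [h3]; simp only [pow_one, mul_assoc])))⟩
    · exact ⟨1, 1, .inr (.inl (by rw [h4]; simp only [pow_one, mul_assoc]))⟩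
  · interval_cases i
    · exact ⟨0, 2, .inr (.inl (by simp [mul_assoc, hx]))⟩
    · refine ⟨4, 3, .inr (.inl ?_)⟩
      calc x * r ^ 2 * x * r ^ 1 * x = x * r ^ 2 * (x * r * x) := by simp only [pow_one, mul_assoc]
        _ = x * (r ^ 5 * r) * x * r ^ 4 := by rw [h1]; group
        _ = r ^ 4 * x * (r ^ 5 * r ^ 3) := by rw [← pow_add, hr, one_mul, h1, mul_assoc, ← pow_add]
        _ = _ := by rw [hr, one_mul, mul_assoc]
    · exact ⟨4, 4, .inr (.inr (.inl (by rw [h22]; simp only [mul_assoc])))⟩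
    · exact ⟨0, 0, .inr (.inr (.inr (by simp)))⟩
    · refine ⟨1, 2, .inr (.inr (.inl ?_))⟩
      calc x * r ^ 2 * x * r ^ 4 * x = x * r ^ 2 * (x * r ^ 4 * x) := by simp only [mul_assoc]
        _ = (x * r ^ 3 * x) * r := by rw [h4]; group
        _ = _ := by rw [h3]; simp only [pow_one, pow_two, mul_assoc]
  · exact ⟨0, 3, .inr (.inr (.inl (by simp only [mul_assoc, hx]; simp)))⟩

theorem mem_closure (he : IsIcosahedralWord x r e) : e ∈ Subgroup.closure {x, r} := by
  have hx : x ∈ Subgroup.closure {x, r} := Subgroup.subset_closure (by simp)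
  have hr (n : ℕ) : r ^ n ∈ Subgroup.closure {x, r} :=
    pow_mem (Subgroup.subset_closure (by simp)) n
  obtain ⟨k, j, rfl | rfl | rfl | rfl⟩ := he
  · exact hr k
  · exact mul_mem (hr k) (mul_mem hx (hr j))
  · exact mul_mem (hr k) (mul_mem (mul_mem (mul_mem hx (hr 2)) hx) (hr j))
  · exact mul_mem (hr k) (mul_mem (mul_mem (mul_mem (mul_mem hx (hr 2)) hx) (hr 3)) hx)

theorem of_mem_closure (hx : x * x = 1) (hr : r ^ 5 = 1) (hrx : r * x * (r * x) * (r * x) = 1)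
    (he : e ∈ Subgroup.closure {x, r}) : IsIcosahedralWord x r e := by
  have hN := (conj_relations hx hr hrx).2.2.2.2
  induction he using Subgroup.closure_induction_right with
  | one => exact ⟨0, 0, .inl (pow_zero r).symm⟩
  | mul_right a ha b hb h =>
    obtain rfl | rfl := hb
    · exact h.mul_involution hx hr hrx
    · exact h.mul_right hN
  | mul_inv_cancel a ha b hb h =>
    obtain rfl | rfl := hb
    · rw [inv_eq_of_mul_eq_one_left hx]
      exact h.mul_involution hx hr hrx
    · rw [← eq_inv_of_mul_eq_one_left (show b ^ 4 * b = 1 by rw [← pow_succ, hr])]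
      simpa only [pow_succ, pow_zero, one_mul, mul_assoc] using
        (((h.mul_right hN).mul_right hN).mul_right hN).mul_right hN

/-- A group whose elements are represented without collisions by the icosahedral words in `s` and
`t` is presented by `⟨x, r ∣ x² = r⁵ = (r * x)³ = 1⟩`. -/
theorem exists_hom {G : Type*} [Group G] {s t : G} (hs : s * s = 1) (ht : t ^ 5 = 1)
    (hts : t * s * (t * s) * (t * s) = 1) (hcl : Subgroup.closure {s, t} = ⊤)
    (hne : ∀ k j : Fin 5, (t ^ (k : ℕ) = 1 → k = 0) ∧ t ^ (k : ℕ) * (s * t ^ (j : ℕ)) ≠ 1 ∧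
      t ^ (k : ℕ) * (s * t ^ 2 * s * t ^ (j : ℕ)) ≠ 1 ∧
      t ^ (k : ℕ) * (s * t ^ 2 * s * t ^ 3 * s) ≠ 1)
    (hx : x * x = 1) (hr : r ^ 5 = 1) (hrx : r * x * (r * x) * (r * x) = 1) :
    ∃ θ : G →* E, θ s = x ∧ θ t = r := by
  let H := Subgroup.closure {((s, x) : G × E), (t, r)}
  have hxH : (s, x) ∈ H := Subgroup.subset_closure (by simp)
  have hrH : (t, r) ∈ H := Subgroup.subset_closure (by simp)
  let π : H →* G := (MonoidHom.fst _ _).comp H.subtype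
  have hπ : Function.Bijective π := by
    constructor
    · rw [injective_iff_map_eq_one]
      rintro ⟨e, he⟩ h1
      have h1 : e.1 = 1 := h1
      have hr5 : ((t, r) : G × E) ^ 5 = 1 := Prod.ext ht hr
      obtain ⟨k, j, h⟩ := of_mem_closure (Prod.ext hs hx) hr5 (Prod.ext hts hrx) he
      rw [pow_eq_pow_mod k hr5, pow_eq_pow_mod j hr5] at h
      obtain ⟨h₁, h₂, h₃, h₄⟩ := hne ⟨k % 5, Nat.mod_lt _ (by norm_num)⟩
        ⟨j % 5, Nat.mod_lt _ (by norm_num)⟩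
      rw [Subtype.ext_iff]
      rcases h with rfl | rfl | rfl | rfl
      · have := congrArg Fin.val (h₁ h1)
        simp only [Fin.val_zero] at this
        simp [this]
      · exact absurd h1 h₂
      · exact absurd h1 h₃
      · exact absurd h1 h₄
    · have : π.range = ⊤ := by
        rw [eq_top_iff, ← hcl, Subgroup.closure_le]
        rintro _ (rfl | rfl)
        · exact ⟨⟨_, hxH⟩, rfl⟩
        · exact ⟨⟨_, hrH⟩, rfl⟩
      exact MonoidHom.range_eq_top.1 this
  let e := MulEquiv.ofBijective π hπ
  refine ⟨(MonoidHom.snd _ _).comp (H.subtype.comp e.symm.toMonoidHom), ?_, ?_⟩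
  · have : e.symm s = ⟨_, hxH⟩ := e.symm_apply_eq.2 rfl
    simp [this]
  · have : e.symm t = ⟨_, hrH⟩ := e.symm_apply_eq.2 rfl
    simp [this]

end IsIcosahedralWord

namespace alternatingGroup

/-- The involution `(0 1)(2 3)` of `A₅`. -/
def involution : alternatingGroup (Fin 5) :=
  ⟨Equiv.swap 0 1 * Equiv.swap 2 3, Equiv.Perm.mem_alternatingGroup.2 (by decide)⟩

/-- An element of order five of `A₅` whose product with `involution` has order three. -/
def rotation : alternatingGroup (Fin 5) :=
  ⟨Equiv.swap 0 2 * Equiv.swap 2 4, Equiv.Perm.mem_alternatingGroup.2 (by decide)⟩ * involution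

theorem involution_mul_self : involution * involution = 1 := by decide

theorem rotation_pow_five : rotation ^ 5 = 1 := by decide

theorem rotation_mul_involution_cubed :
    rotation * involution * (rotation * involution) * (rotation * involution) = 1 := by decide

set_option maxRecDepth 10000 in
theorem isIcosahedralWord (g : alternatingGroup (Fin 5)) :
    IsIcosahedralWord involution rotation g := by
  have : ∀ g : alternatingGroup (Fin 5), ∃ k j : Fin 5, g = rotation ^ (k : ℕ) ∨
      g = rotation ^ (k : ℕ) * (involution * rotation ^ (j : ℕ)) ∨
      g = rotation ^ (k : ℕ) *
        (involution * rotation ^ 2 * involution * rotation ^ (j : ℕ)) ∨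
      g = rotation ^ (k : ℕ) *
        (involution * rotation ^ 2 * involution * rotation ^ 3 * involution) := by
    decide
  obtain ⟨k, j, h⟩ := this g
  exact ⟨k, j, h⟩

set_option maxRecDepth 10000 in
theorem word_ne_one : ∀ k j : Fin 5,
    (rotation ^ (k : ℕ) = 1 → k = 0) ∧
    rotation ^ (k : ℕ) * (involution * rotation ^ (j : ℕ)) ≠ 1 ∧
    rotation ^ (k : ℕ) * (involution * rotation ^ 2 * involution * rotation ^ (j : ℕ)) ≠ 1 ∧
    rotation ^ (k : ℕ) *
      (involution * rotation ^ 2 * involution * rotation ^ 3 * involution) ≠ 1 := by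
  decide

theorem closure_involution_rotation : Subgroup.closure {involution, rotation} = ⊤ :=
  (Subgroup.eq_top_iff' _).2 fun g => (isIcosahedralWord g).mem_closure

/-- `A₅` is presented by `⟨x, r ∣ x² = r⁵ = (r * x)³ = 1⟩`. -/
theorem exists_hom_of_relations {E : Type*} [Group E] {x r : E} (hx : x * x = 1) (hr : r ^ 5 = 1)
    (hrx : r * x * (r * x) * (r * x) = 1) :
    ∃ θ : alternatingGroup (Fin 5) →* E, θ involution = x ∧ θ rotation = r :=
  IsIcosahedralWord.exists_hom involution_mul_self rotation_pow_five
    rotation_mul_involution_cubed closure_involution_rotation word_ne_one hx hr hrx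

end alternatingGroup

section CocycleExtension

variable {G A : Type*} [Group G] [AddCommGroup A]

/-- The 2-cocycle condition for trivial coefficients. -/
def IsTrivialCocycle₂ (f : G × G → A) : Prop :=
  ∀ g h j, f (g * h, j) + f (g, h) = f (h, j) + f (g, h * j)

namespace IsTrivialCocycle₂

variable {f : G × G → A}

theorem map_one_left (hf : IsTrivialCocycle₂ f) (g : G) : f (1, g) = f (1, 1) := by
  simpa using (hf 1 1 g).symm

theorem map_one_right (hf : IsTrivialCocycle₂ f) (g : G) : f (g, 1) = f (1, 1) := by
  simpa using hf g 1 1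

end IsTrivialCocycle₂

/-- The central extension of `G` by `A` attached to a 2-cocycle. -/
@[ext]
structure CocycleExtension {f : G × G → A} (hf : IsTrivialCocycle₂ f) where
  /-- The coordinate in `A`. -/
  fib : A
  /-- The coordinate in `G`. -/
  base : G

namespace CocycleExtension

variable {f : G × G → A} {hf : IsTrivialCocycle₂ f}

instance : Mul (CocycleExtension hf) :=
  ⟨fun a b => ⟨a.fib + b.fib + f (a.base, b.base), a.base * b.base⟩⟩

instance : One (CocycleExtension hf) := ⟨⟨-f (1, 1), 1⟩⟩

instance : Inv (CocycleExtension hf) :=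
  ⟨fun a => ⟨-a.fib - f (a.base⁻¹, a.base) - f (1, 1), a.base⁻¹⟩⟩

@[simp] theorem mul_fib (a b : CocycleExtension hf) :
    (a * b).fib = a.fib + b.fib + f (a.base, b.base) := rfl

@[simp] theorem mul_base (a b : CocycleExtension hf) : (a * b).base = a.base * b.base := rfl

@[simp] theorem one_fib : (1 : CocycleExtension hf).fib = -f (1, 1) := rfl

@[simp] theorem one_base : (1 : CocycleExtension hf).base = 1 := rfl

@[simp] theorem inv_fib (a : CocycleExtension hf) :
    a⁻¹.fib = -a.fib - f (a.base⁻¹, a.base) - f (1, 1) := rfl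

@[simp] theorem inv_base (a : CocycleExtension hf) : a⁻¹.base = a.base⁻¹ := rfl

instance : Group (CocycleExtension hf) :=
  Group.ofLeftAxioms
    (fun a b c => by
      ext
      · have := hf a.base b.base c.base
        simp only [mul_fib, mul_base]
        rw [add_right_comm (a.fib + b.fib), add_assoc (a.fib + b.fib + c.fib),
          add_comm (f _), this]
        abel
      · simp [mul_assoc])
    (fun a => by ext <;> simp [hf.map_one_left])
    (fun a => by ext <;> simp; abel)

variable (hf) in
/-- The projection of a central extension onto its quotient. -/
def proj : CocycleExtension hf →* G where
  toFun := base
  map_one' := rfl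
  map_mul' _ _ := rfl

variable (hf) in
/-- The inclusion of the kernel in a central extension. -/
def incl : Multiplicative A →* CocycleExtension hf where
  toFun a := ⟨a.toAdd - f (1, 1), 1⟩
  map_one' := by ext <;> simp
  map_mul' a b := by ext <;> simp; abel

@[simp] theorem incl_fib (a : Multiplicative A) : (incl hf a).fib = a.toAdd - f (1, 1) := rfl

@[simp] theorem incl_base (a : Multiplicative A) : (incl hf a).base = 1 := rfl

theorem incl_commute (a : Multiplicative A) (e : CocycleExtension hf) :
    Commute (incl hf a) e := by
  ext <;> simp [hf.map_one_left, hf.map_one_right]; abel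

theorem eq_incl {e : CocycleExtension hf} (he : e.base = 1) :
    e = incl hf (.ofAdd (e.fib + f (1, 1))) := by
  ext <;> simp [he]

theorem mk_zero_pow (g : G) (n : ℕ) :
    (⟨0, g⟩ : CocycleExtension hf) ^ n =
      ⟨-f (1, 1) + ∑ i ∈ Finset.range n, f (g ^ i, g), g ^ n⟩ := by
  induction n with
  | zero => ext <;> simp
  | succ n ih =>
    rw [pow_succ, ih]
    ext
    · simp [Finset.sum_range_succ]; abel
    · simp [pow_succ]

theorem mk_zero_pow_eq_incl {g : G} {n : ℕ} (hg : g ^ n = 1) :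
    (⟨0, g⟩ : CocycleExtension hf) ^ n =
      incl hf (.ofAdd (∑ i ∈ Finset.range n, f (g ^ i, g))) := by
  rw [mk_zero_pow]
  ext
  · simp; abel
  · simp [hg]

variable (hf) in
/-- The inverse of `incl` on the kernel of `proj`. -/
def kerProj : (proj hf).ker →* Multiplicative A where
  toFun e := .ofAdd (e.1.fib + f (1, 1))
  map_one' := by simp
  map_mul' a b := by
    have ha : a.1.base = 1 := a.2
    have hb : b.1.base = 1 := b.2
    rw [← ofAdd_add, Subgroup.coe_mul, mul_fib, ha, hb]
    congr 1
    abel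

/-- Raising to the power `|G|` is a homomorphism from a central extension of `G` to its kernel. -/
theorem exists_transfer [Finite G] : ∃ τ : CocycleExtension hf →* Multiplicative A,
    ∀ (e : CocycleExtension hf) (a : Multiplicative A),
      e ^ Nat.card G = incl hf a → τ e = a := by
  have hsurj : Function.Surjective (proj hf) := fun g => ⟨⟨0, g⟩, rfl⟩
  have hindex : (proj hf).ker.index = Nat.card G := by
    rw [Subgroup.index_ker, MonoidHom.range_eq_top.2 hsurj, Subgroup.card_top]
  have : (proj hf).ker.FiniteIndex := ⟨by rw [hindex]; exact Nat.card_pos.ne'⟩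
  refine ⟨MonoidHom.transfer (kerProj hf), fun e a h => ?_⟩
  rw [MonoidHom.transfer_eq_pow]
  · simp [kerProj, hindex, h]
  · intro k g₀ hk
    have hk : (g₀⁻¹ * e ^ k * g₀).base = 1 := hk
    rw [eq_incl hk]
    set b := incl hf (.ofAdd ((g₀⁻¹ * e ^ k * g₀).fib + f (1, 1))) with hb
    have h1 : g₀⁻¹ * e ^ k * g₀ = b := eq_incl hk
    have h2 : b * g₀⁻¹ = g₀⁻¹ * b := (incl_commute _ _).eq
    rw [← h1, mul_inv_cancel_right, mul_right_inj] at h2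
    rw [h2, h1]

end CocycleExtension

end CocycleExtension

namespace alternatingGroup

open CocycleExtension

variable {A : Type*} [AddCommGroup A]

/-- The value `15 u - 10 v + 6 w`, where `u`, `v`, `w` are the values of the relators `x²`,
`(r * x)³` and `r⁵` of `A₅` on the canonical lifts to the extension attached to a 2-cocycle. -/
def cocycleInvariant (f : alternatingGroup (Fin 5) × alternatingGroup (Fin 5) → A) : A :=
  15 • ∑ i ∈ Finset.range 2, f (involution ^ i, involution) -
    10 • (3 • f (rotation, involution) +
      ∑ i ∈ Finset.range 3, f ((rotation * involution) ^ i, rotation * involution)) +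
    6 • ∑ i ∈ Finset.range 5, f (rotation ^ i, rotation)

theorem cocycleInvariant_add
    (f g : alternatingGroup (Fin 5) × alternatingGroup (Fin 5) → A) :
    cocycleInvariant (f + g) = cocycleInvariant f + cocycleInvariant g := by
  simp only [cocycleInvariant, Pi.add_apply, Finset.sum_add_distrib, smul_add]
  abel

theorem involution_sq : involution ^ 2 = 1 := by rw [pow_two, involution_mul_self]

theorem rotation_mul_involution_pow_three : (rotation * involution) ^ 3 = 1 := by
  rw [pow_succ, pow_two, rotation_mul_involution_cubed]

theorem sum_coboundary_pow {G : Type*} [Group G] (φ : G → A) {g : G} {n : ℕ} (hg : g ^ n = 1) :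
    ∑ i ∈ Finset.range n, (φ g - φ (g ^ i * g) + φ (g ^ i)) = n • φ g := by
  have (i : ℕ) : φ g - φ (g ^ i * g) + φ (g ^ i) = φ g + (φ (g ^ i) - φ (g ^ (i + 1))) := by
    rw [pow_succ]; abel
  simp only [this]
  rw [Finset.sum_add_distrib, Finset.sum_range_sub' (fun i => φ (g ^ i)), hg]
  simp

theorem cocycleInvariant_coboundary (φ : alternatingGroup (Fin 5) → A) :
    cocycleInvariant (fun g => φ g.2 - φ (g.1 * g.2) + φ g.1) = 0 := by
  simp only [cocycleInvariant]
  rw [sum_coboundary_pow φ involution_sq, sum_coboundary_pow φ rotation_pow_five,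
    sum_coboundary_pow φ rotation_mul_involution_pow_three]
  abel

section

variable {f : alternatingGroup (Fin 5) × alternatingGroup (Fin 5) → A}

theorem lift_involution_sq (hf : IsTrivialCocycle₂ f) :
    (⟨0, involution⟩ : CocycleExtension hf) ^ 2 =
      incl hf (.ofAdd (∑ i ∈ Finset.range 2, f (involution ^ i, involution))) :=
  mk_zero_pow_eq_incl involution_sq

theorem lift_rotation_pow_five (hf : IsTrivialCocycle₂ f) :
    (⟨0, rotation⟩ : CocycleExtension hf) ^ 5 =
      incl hf (.ofAdd (∑ i ∈ Finset.range 5, f (rotation ^ i, rotation))) :=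
  mk_zero_pow_eq_incl rotation_pow_five

theorem lift_mul_pow_three (hf : IsTrivialCocycle₂ f) :
    ((⟨0, rotation⟩ : CocycleExtension hf) * ⟨0, involution⟩) ^ 3 =
      incl hf (.ofAdd (3 • f (rotation, involution) +
        ∑ i ∈ Finset.range 3, f ((rotation * involution) ^ i, rotation * involution))) := by
  have : (⟨0, rotation⟩ : CocycleExtension hf) * ⟨0, involution⟩ =
      incl hf (.ofAdd (f (rotation, involution))) * ⟨0, rotation * involution⟩ := by
    ext
    · simp [hf.map_one_left]
    · simp
  rw [this, (incl_commute _ _).mul_pow, mk_zero_pow_eq_incl rotation_mul_involution_pow_three,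
    ← map_pow, ← map_mul, ofAdd_add, ofAdd_nsmul]

/-- The transfer to the kernel of the extension shows that the invariant is killed by two. -/
theorem two_nsmul_cocycleInvariant (hf : IsTrivialCocycle₂ f) : 2 • cocycleInvariant f = 0 := by
  obtain ⟨τ, hτ⟩ := exists_transfer (hf := hf)
  have hcard : Nat.card (alternatingGroup (Fin 5)) = 60 := by
    rw [Nat.card_eq_fintype_card]; decide
  rw [hcard] at hτ
  have key {e : CocycleExtension hf} {a : Multiplicative A} {n : ℕ} (k : ℕ)
      (h : e ^ n = incl hf a) (hk : n * k = 60) : τ e = a ^ k :=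
    hτ _ _ (by rw [map_pow, ← h, ← pow_mul, hk])
  have h1 := key 30 (lift_involution_sq hf) rfl
  have h2 := key 12 (lift_rotation_pow_five hf) rfl
  have h3 := key 20 (lift_mul_pow_three hf) rfl
  rw [map_mul, h1, h2, ← ofAdd_nsmul, ← ofAdd_nsmul, ← ofAdd_nsmul, ← ofAdd_add] at h3
  have h3 := Multiplicative.ofAdd.injective h3
  rw [cocycleInvariant]
  generalize (∑ i ∈ Finset.range 2, f (involution ^ i, involution)) = u at *
  generalize (∑ i ∈ Finset.range 5, f (rotation ^ i, rotation)) = w at *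
  generalize (3 • f (rotation, involution) + _) = v at *
  rw [← sub_eq_zero] at h3
  rw [← h3]
  abel

theorem exists_coboundary_of_cocycleInvariant_eq_zero (hf : IsTrivialCocycle₂ f)
    (h : cocycleInvariant f = 0) :
    ∃ φ : alternatingGroup (Fin 5) → A, ∀ g h, φ h - φ (g * h) + φ g = f (g, h) := by
  have hx := lift_involution_sq hf
  have hr := lift_rotation_pow_five hf
  have hrx := lift_mul_pow_three hf
  rw [cocycleInvariant] at h
  generalize (∑ i ∈ Finset.range 2, f (involution ^ i, involution)) = u at *
  generalize (∑ i ∈ Finset.range 5, f (rotation ^ i, rotation)) = w at *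
  generalize (3 • f (rotation, involution) + _) = v at *
  set a := incl hf (.ofAdd (7 • u - 5 • v + 3 • w)) with ha
  set b := incl hf (.ofAdd (3 • u - 2 • v + w)) with hb
  have hca (e) : Commute a e := incl_commute _ _
  have hcb (e) : Commute b e := incl_commute _ _
  obtain ⟨θ, hθx, hθr⟩ := exists_hom_of_relations (x := a * ⟨0, involution⟩)
    (r := b * ⟨0, rotation⟩)
    (by
      rw [← pow_two, (hca _).mul_pow, hx, ha, ← map_pow, ← map_mul, ← ofAdd_nsmul, ← ofAdd_add,
        ← map_one (incl hf), ← ofAdd_zero, ← h]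
      congr 2
      abel)
    (by
      rw [(hcb _).mul_pow, hr, hb, ← map_pow, ← map_mul, ← ofAdd_nsmul, ← ofAdd_add,
        ← map_one (incl hf), ← ofAdd_zero, ← h]
      congr 2
      abel)
    (by
      rw [← pow_two, ← pow_succ, mul_assoc, ← mul_assoc _ a, ← (hca _).eq, mul_assoc, ← mul_assoc,
        ((hcb _).mul_left (hca _)).mul_pow, hrx, ha, hb, ← map_mul, ← map_pow, ← map_mul,
        ← ofAdd_add, ← ofAdd_nsmul, ← ofAdd_add, ← map_one (incl hf), ← ofAdd_zero,
        ← nsmul_zero 2, ← h]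
      congr 2
      abel)
  have hθ : (proj hf).comp θ = MonoidHom.id _ := by
    refine MonoidHom.eq_of_eqOn_dense closure_involution_rotation ?_
    rintro _ (rfl | rfl)
    · change (θ involution).base = involution
      rw [hθx, mul_base, ha, incl_base, one_mul]
    · change (θ rotation).base = rotation
      rw [hθr, mul_base, hb, incl_base, one_mul]
  have hbase (g) : (θ g).base = g := DFunLike.congr_fun hθ g
  refine ⟨fun g => -(θ g).fib, fun g h => ?_⟩
  have := congrArg fib (map_mul θ g h)
  rw [mul_fib, hbase, hbase] at this
  simp only [this]
  abel

end

/-- A homomorphism up to sign yields a cocycle with values in the 2-torsion. -/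
theorem isTrivialCocycle₂_of_mul_eq_or_eq_neg {G K : Type*} [Group G] [Group K]
    [HasDistribNeg K] [DecidableEq K] (hne : ∀ M : K, M ≠ -M) {ρ : G → K}
    (hρ : ∀ g h, ρ g * ρ h = ρ (g * h) ∨ ρ g * ρ h = -ρ (g * h)) {a : A} (ha : a + a = 0) :
    IsTrivialCocycle₂ fun g : G × G => if ρ g.1 * ρ g.2 = ρ (g.1 * g.2) then 0 else a := by
  intro g h j
  have hassoc := mul_assoc (ρ g) (ρ h) (ρ j)
  have hne' (M : K) : -M ≠ M := (hne M).symm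
  have e4 := hρ g (h * j)
  rw [← mul_assoc g] at e4
  dsimp only
  rw [← mul_assoc g]
  rcases hρ g h with e1 | e1 <;> rcases hρ h j with e2 | e2 <;>
    rcases hρ (g * h) j with e3 | e3 <;> rcases e4 with e4 | e4 <;>
    rw [e1, e2] at hassoc <;>
    simp only [neg_mul, mul_neg, e3, e4, neg_neg, hne, hne'] at hassoc <;>
    simp [e1, e2, e3, e4, hne', ha]

theorem SL_mem_center_iff {M : Matrix.SpecialLinearGroup (Fin 2) (ZMod 5)} :
    M ∈ Subgroup.center (Matrix.SpecialLinearGroup (Fin 2) (ZMod 5)) ↔ M = 1 ∨ M = -1 := by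
  have hc : ∀ c : ZMod 5, c ^ 2 = 1 ↔ c = 1 ∨ c = -1 := by decide
  simp only [Matrix.SpecialLinearGroup.mem_center_iff, Fintype.card_fin, hc, or_and_right,
    exists_or, exists_eq_left, map_neg, map_one, @eq_comm _ _ M.1]
  exact or_congr ⟨fun h => Subtype.ext h, fun h => congrArg Subtype.val h⟩
    ⟨fun h => Subtype.ext h, fun h => congrArg Subtype.val h⟩

theorem SL_ne_neg (M : Matrix.SpecialLinearGroup (Fin 2) (ZMod 5)) : M ≠ -M := by
  intro h
  have h1 : (1 : Matrix.SpecialLinearGroup (Fin 2) (ZMod 5)) = -1 := by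
    simpa using congrArg (M⁻¹ * ·) h
  revert h1
  decide

/-- `A₅` lifts to the special linear group `SL(2, 5)` up to sign, the square of the lift of an
involution being `-1`. -/
theorem exists_lift_SL : ∃ ρ : alternatingGroup (Fin 5) →
      Matrix.SpecialLinearGroup (Fin 2) (ZMod 5),
    (∀ g h, ρ g * ρ h = ρ (g * h) ∨ ρ g * ρ h = -ρ (g * h)) ∧
      ρ involution * ρ involution = -1 := by
  let S : Matrix.SpecialLinearGroup (Fin 2) (ZMod 5) := ⟨!![0, -1; 1, 0], by decide⟩
  let R : Matrix.SpecialLinearGroup (Fin 2) (ZMod 5) := ⟨!![1, 1; 0, 1], by decide⟩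
  have hS : S * S = -1 := by decide
  have hR : R ^ 5 = 1 := by decide
  have hRS : R * S * (R * S) * (R * S) = -1 := by decide
  obtain ⟨θ, hθS, -⟩ := exists_hom_of_relations
    (x := QuotientGroup.mk' (Subgroup.center _) S) (r := QuotientGroup.mk' _ R)
    (by
      rw [← map_mul, QuotientGroup.mk'_apply, QuotientGroup.eq_one_iff, SL_mem_center_iff]
      exact .inr hS)
    (by
      rw [← map_pow, QuotientGroup.mk'_apply, QuotientGroup.eq_one_iff, SL_mem_center_iff]
      exact .inl hR)
    (by
      rw [← map_mul, ← map_mul, ← map_mul, QuotientGroup.mk'_apply, QuotientGroup.eq_one_iff,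
        SL_mem_center_iff]
      exact .inr hRS)
  choose ρ hρ using fun g => QuotientGroup.mk'_surjective _ (θ g)
  have heq {M N : Matrix.SpecialLinearGroup (Fin 2) (ZMod 5)}
      (h : QuotientGroup.mk' (Subgroup.center _) M = QuotientGroup.mk' _ N) :
      M = N ∨ M = -N := by
    rw [QuotientGroup.mk'_apply, QuotientGroup.mk'_apply, eq_comm, QuotientGroup.eq,
      SL_mem_center_iff, inv_mul_eq_iff_eq_mul, inv_mul_eq_iff_eq_mul] at h
    simpa using h
  refine ⟨ρ, fun g h => heq (by rw [map_mul, hρ, hρ, hρ, map_mul]), ?_⟩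
  rcases heq ((hρ involution).trans hθS) with h | h <;> rw [h]
  · exact hS
  · rw [neg_mul_neg, hS]

/-- The double cover of `A₅` by `SL(2, 5)` yields a cocycle with any prescribed 2-torsion
invariant. -/
theorem exists_cocycleInvariant_eq {a : A} (ha : 2 • a = 0) :
    ∃ f : alternatingGroup (Fin 5) × alternatingGroup (Fin 5) → A,
      IsTrivialCocycle₂ f ∧ cocycleInvariant f = a := by
  obtain ⟨ρ, hmul, hinv⟩ := exists_lift_SL
  have haa : a + a = 0 := by rw [← two_nsmul, ha]
  let f : alternatingGroup (Fin 5) × alternatingGroup (Fin 5) → A := fun g =>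
    if ρ g.1 * ρ g.2 = ρ (g.1 * g.2) then 0 else a
  have hf : IsTrivialCocycle₂ f := isTrivialCocycle₂_of_mul_eq_or_eq_neg SL_ne_neg hmul haa
  have hf₂ (p) : 2 • f p = 0 := by
    dsimp only [f]; split_ifs <;> simp [ha]
  have heven (n : ℕ) (p : ℕ → alternatingGroup (Fin 5) × alternatingGroup (Fin 5)) :
      2 • ∑ i ∈ Finset.range n, f (p i) = 0 := by
    rw [Finset.smul_sum]
    exact Finset.sum_eq_zero fun i _ => hf₂ (p i)
  have hu : ∑ i ∈ Finset.range 2, f (involution ^ i, involution) = a := by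
    have h1 : ρ 1 = 1 ∨ ρ 1 = -1 := by
      have := hmul 1 1
      rw [one_mul, mul_eq_left, ← mul_neg_one (ρ 1), mul_right_inj] at this
      exact this
    rw [Finset.sum_range_succ, Finset.sum_range_one, pow_zero, pow_one, hf.map_one_left]
    simp only [f, hinv, involution_mul_self, one_mul]
    have hne := SL_ne_neg 1
    rcases h1 with h1 | h1 <;> simp [h1, hne, hne.symm]
  refine ⟨f, hf, ?_⟩
  rw [cocycleInvariant, hu, show 15 • a = a + 7 • 2 • a by abel, ha,
    show ∀ b : A, 10 • b = 5 • 2 • b from fun b => by abel, smul_add 2, heven, smul_comm 2, hf₂,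
    show ∀ b : A, 6 • b = 3 • 2 • b from fun b => by abel, heven]
  simp

end alternatingGroup

open groupCohomology alternatingGroup

/-- The second cohomology of `A₅` with trivial coefficients is the 2-torsion of the coefficients. -/
theorem alternatingGroup.nonempty_groupCohomology_two_addEquiv (A : Type) [AddCommGroup A] :
    Nonempty (groupCohomology (Rep.trivial ℤ (alternatingGroup (Fin 5)) A) 2 ≃+
      (nsmulAddMonoidHom 2 : A →+ A).ker) := by
  let M := Rep.trivial ℤ (alternatingGroup (Fin 5)) A
  have hcoc (f : alternatingGroup (Fin 5) × alternatingGroup (Fin 5) → A) :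
      f ∈ cocycles₂ M ↔ IsTrivialCocycle₂ f := mem_cocycles₂_iff (A := M) f
  let Φ : cocycles₂ M →+ A :=
    AddMonoidHom.mk' (fun f => cocycleInvariant (A := A) f.1)
      fun f g => cocycleInvariant_add (A := A) f.1 g.1
  let Ψ : cocycles₂ M →+ (nsmulAddMonoidHom 2 : A →+ A).ker :=
    Φ.codRestrict _ fun f => two_nsmul_cocycleInvariant ((hcoc _).1 f.2)
  have hΨ : Function.Surjective Ψ := by
    rintro ⟨a, ha⟩
    obtain ⟨f, hf, h⟩ := exists_cocycleInvariant_eq (show 2 • a = 0 from ha)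
    exact ⟨⟨f, (hcoc f).2 hf⟩, Subtype.ext h⟩
  let p : cocycles₂ M →+ groupCohomology M 2 := (H2π M).hom.toAddMonoidHom
  have hp : Function.Surjective p := (ModuleCat.epi_iff_surjective (H2π M)).1 inferInstance
  have hker : p.ker = Ψ.ker := by
    ext f
    rw [AddMonoidHom.mem_ker, AddMonoidHom.mem_ker]
    refine (H2π_eq_zero_iff f).trans ⟨?_, fun h => ?_⟩
    · rintro ⟨φ, hφ⟩
      refine Subtype.ext ?_
      change cocycleInvariant (A := A) f.1 = 0
      have : f.1 = fun g => φ g.2 - φ (g.1 * g.2) + φ g.1 := hφ.symm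
      rw [this]
      exact cocycleInvariant_coboundary φ
    · obtain ⟨φ, hφ⟩ := exists_coboundary_of_cocycleInvariant_eq_zero ((hcoc _).1 f.2)
        (Subtype.ext_iff.1 h)
      exact ⟨φ, funext fun g => hφ g.1 g.2⟩
  exact ⟨(QuotientAddGroup.quotientKerEquivOfSurjective p hp).symm.trans
    ((QuotientAddGroup.quotientAddEquivOfEq hker).trans
      (QuotientAddGroup.quotientKerEquivOfSurjective Ψ hΨ))⟩

/-- For every positive integer `m`, the second group cohomology
`H²(A₅, ℤ/m)` of the alternating group `A₅` with coefficients in `ℤ/m` (trivial action)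
is isomorphic, as an abelian group, to `ℤ/gcd(m, 2)`. -/
theorem stmt_2 (m : ℕ) (hm : 0 < m) :
    Nonempty
      ((groupCohomology (Rep.trivial ℤ (alternatingGroup (Fin 5)) (ZMod m)) 2) ≃+
        ZMod (Nat.gcd m 2)) := by
  have : NeZero m := ⟨hm.ne'⟩
  obtain ⟨e⟩ := nonempty_groupCohomology_two_addEquiv (ZMod m)
  have hcard := IsAddCyclic.card_nsmulAddMonoidHom_ker (ZMod m) 2
  rw [Nat.card_zmod] at hcard
  have hcyc : IsAddCyclic (nsmulAddMonoidHom 2 : ZMod m →+ ZMod m).ker := inferInstance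
  rw [← hcard]
  exact ⟨e.trans (zmodAddCyclicAddEquiv hcyc).symm⟩
end

section
/- Let m = 3^r·m₊ with r ≥ 1 and gcd(m₊, 6) = 1. Let G be a finite group with a cyclic subgroup C of order m contained in the center of G, such that G/C is isomorphic to the alternating group A₄ and C has no complement in G. Then G is isomorphic to ℤ/m₊ × ((ℤ/2 × ℤ/2) ⋊_α ℤ/3^{r+1}), where α : ℤ/3^{r+1} → Aut(ℤ/2 × ℤ/2) is any homomorphism whose image has order 3. -/
/-- The Klein four-group, written as a product of two cyclic groups of order two. -/
abbrev KleinProd : Type := Multiplicative (ZMod 2) × Multiplicative (ZMod 2)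

/-- An element whose `n`-th power is trivial determines a homomorphism from `ℤ/n`. -/
lemma exists_zmodHom {G : Type*} [Group G] (n : ℕ) (x : G) (hx : x ^ n = 1) :
    ∃ φ : Multiplicative (ZMod n) →* G,
      ∀ k : ℕ, φ (Multiplicative.ofAdd (k : ZMod n)) = x ^ k := by
  refine ⟨AddMonoidHom.toMultiplicativeLeft (ZMod.lift n
    ⟨zmultiplesHom (Additive G) (Additive.ofMul x), ?_⟩), fun k => ?_⟩
  · simp only [zmultiplesHom_apply, natCast_zsmul, ← ofMul_pow, hx, ofMul_one]
  · have h := ZMod.lift_coe n (f := ⟨zmultiplesHom (Additive G) (Additive.ofMul x), by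
      simp only [zmultiplesHom_apply, natCast_zsmul, ← ofMul_pow, hx, ofMul_one]⟩) (k : ℤ)
    simp only [Int.cast_natCast, zmultiplesHom_apply, natCast_zsmul, ← ofMul_pow] at h
    exact congrArg Additive.toMul h

lemma exists_natCast_zmod {n : ℕ} [NeZero n] (k : Multiplicative (ZMod n)) :
    ∃ i : ℕ, k = Multiplicative.ofAdd (i : ZMod n) :=
  ⟨(Multiplicative.toAdd k).val, by rw [ZMod.natCast_zmod_val]; rfl⟩

/-- Two commuting elements of order dividing two, cyclically permuted together with their product
by an endomorphism `τ`, determine a homomorphism from the Klein four-group which intertwines the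
standard automorphism of order three with `τ`. -/
lemma exists_kleinHom {G : Type*} [Group G] (a b : G) (ha : a ^ 2 = 1) (hb : b ^ 2 = 1)
    (hab : Commute a b) (τ : G →* G) (hτa : τ a = b) (hτb : τ b = a * b) :
    ∃ ψ : KleinProd →* G,
      (∀ i j : ℕ, ψ (Multiplicative.ofAdd (i : ZMod 2), Multiplicative.ofAdd (j : ZMod 2))
        = a ^ i * b ^ j) ∧
      ∀ w : KleinProd, ψ (w.2, w.1 * w.2) = τ (ψ w) := by
  obtain ⟨φ, hφ⟩ := exists_zmodHom 2 a ha
  obtain ⟨χ, hχ⟩ := exists_zmodHom 2 b hb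
  have hc : ∀ i j, Commute (φ i) (χ j) := by
    intro i j
    obtain ⟨i, rfl⟩ := exists_natCast_zmod i
    obtain ⟨j, rfl⟩ := exists_natCast_zmod j
    rw [hφ, hχ]
    exact hab.pow_pow i j
  have key : ∀ i j : ℕ, φ.noncommCoprod χ hc
      (Multiplicative.ofAdd (i : ZMod 2), Multiplicative.ofAdd (j : ZMod 2))
        = a ^ i * b ^ j := by
    intro i j
    rw [MonoidHom.noncommCoprod_apply, hφ, hχ]
  refine ⟨φ.noncommCoprod χ hc, key, ?_⟩
  rintro ⟨i, j⟩
  obtain ⟨i, rfl⟩ := exists_natCast_zmod i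
  obtain ⟨j, rfl⟩ := exists_natCast_zmod j
  rw [← ofAdd_add, ← Nat.cast_add, key, key, map_mul, map_pow, map_pow, hτa, hτb,
    hab.mul_pow, pow_add, ← mul_assoc, ← mul_assoc, (hab.pow_pow j i).eq]

set_option synthInstance.maxSize 1000 in
/-- Every automorphism of order three of the Klein four-group is conjugate to the standard one. -/
lemma exists_conj_kleinAut (σ : MulAut KleinProd) (h3 : σ ^ 3 = 1) (h1 : σ ≠ 1) :
    ∃ e : KleinProd ≃* KleinProd, ∀ w : KleinProd, e (w.2, w.1 * w.2) = σ (e w) := by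
  obtain ⟨v, hv⟩ : ∃ v, σ v ≠ v := by
    by_contra! h
    exact h1 (MulEquiv.ext h)
  have h3v : σ (σ (σ v)) = v := by
    have := DFunLike.congr_fun h3 v
    simpa [pow_succ] using this
  have sq : ∀ v : KleinProd, v ^ 2 = 1 := by decide
  have third : ∀ v w t : KleinProd, v ≠ 1 → w ≠ 1 → v ≠ w → t ≠ 1 → t ≠ w → t ≠ v →
      t = v * w := by decide
  have indep : ∀ v w : KleinProd, v ≠ 1 → w ≠ 1 → v ≠ w → ∀ i j : ZMod 2,
      v ^ i.val * w ^ j.val = 1 → i = 0 ∧ j = 0 := by decide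
  have hv1 : v ≠ 1 := by
    rintro rfl
    exact hv (map_one σ)
  have hw1 : σ v ≠ 1 := (map_ne_one_iff σ σ.injective).2 hv1
  have ht : σ (σ v) = v * σ v := by
    refine third _ _ _ hv1 hw1 hv.symm ((map_ne_one_iff σ σ.injective).2 hw1)
      (fun h => hv (σ.injective h)) (fun h => ?_)
    rw [h] at h3v
    exact hv h3v
  obtain ⟨ψ, hψ, hψσ⟩ := exists_kleinHom v (σ v) (sq _) (sq _) (Commute.all _ _)
    σ.toMonoidHom rfl ht
  have hinj : Function.Injective ψ := by
    rw [injective_iff_map_eq_one]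
    rintro ⟨i, j⟩ hij
    have := hψ (Multiplicative.toAdd i).val (Multiplicative.toAdd j).val
    rw [ZMod.natCast_zmod_val, ZMod.natCast_zmod_val, ofAdd_toAdd, ofAdd_toAdd, hij] at this
    obtain ⟨hi, hj⟩ := indep v (σ v) hv1 hw1 hv.symm _ _ this.symm
    exact Prod.ext hi hj
  exact ⟨MulEquiv.ofBijective ψ ⟨hinj, Finite.surjective_of_injective hinj⟩, hψσ⟩

/-- Generators of `A₄` exhibiting it as a semidirect product of a Klein four-group and a cyclic
group of order three. -/
lemma exists_alternatingGroup_four_generators : ∃ c s u : alternatingGroup (Fin 4),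
    s ^ 2 = 1 ∧ s * u = u * s ∧ c * s * c⁻¹ = u ∧ c * u * c⁻¹ = s * u ∧ c ^ 3 = 1 ∧
    (∀ i j : ZMod 2, ∀ k : Fin 3, s ^ i.val * u ^ j.val * c ^ k.val = 1 →
      i = 0 ∧ j = 0 ∧ k = 0) ∧
    ∀ g, ∃ i j : Fin 2, ∃ k : Fin 3, s ^ i.val * u ^ j.val * c ^ k.val = g := by
  refine ⟨⟨Equiv.swap 0 1 * Equiv.swap 1 2, ?_⟩, ⟨Equiv.swap 0 1 * Equiv.swap 2 3, ?_⟩,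
    ⟨Equiv.swap 1 2 * Equiv.swap 0 3, ?_⟩, ?_, ?_, ?_, ?_, ?_, ?_, ?_⟩
  iterate 3 rw [Equiv.Perm.mem_alternatingGroup]; decide
  all_goals decide +kernel

/-- In a central extension by a group of odd order, square roots of the identity are determined by
their images. -/
lemma eq_of_sq_eq_one_of_map_eq {G A : Type*} [Group G] [Group A] (f : G →* A)
    (hcen : f.ker ≤ Subgroup.center G) (hodd : Odd (Nat.card f.ker)) {u v : G}
    (hu : u ^ 2 = 1) (hv : v ^ 2 = 1) (h : f u = f v) : u = v := by
  have hz : u⁻¹ * v ∈ f.ker := by simp [MonoidHom.mem_ker, h]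
  have hzu : Commute u (u⁻¹ * v) := (Subgroup.mem_center_iff.1 (hcen hz) u)
  have hz2 : (u⁻¹ * v) ^ 2 = 1 := by
    have := hzu.mul_pow 2
    rw [mul_inv_cancel_left, hu, hv, one_mul] at this
    exact this.symm
  have hzm : (u⁻¹ * v) ^ Nat.card f.ker = 1 := by
    have := pow_card_eq_one' (x := (⟨_, hz⟩ : f.ker))
    simpa [Subtype.ext_iff] using this
  have := pow_gcd_eq_one.2 ⟨hz2, hzm⟩
  rw [Nat.Coprime.gcd_eq_one (Nat.coprime_two_left.2 hodd), pow_one] at this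
  exact (inv_mul_eq_one.1 this)

/-- The homomorphism from `(ℤ/2 × ℤ/2) ⋊ ℤ/n` to a central extension of `A₄` by a group of odd
order, attached to a lift `x` of a generator of order three. -/
lemma exists_semidirectHom {G : Type*} [Group G] (f : G →* alternatingGroup (Fin 4))
    (hsurj : Function.Surjective f) (hcen : f.ker ≤ Subgroup.center G)
    (hodd : Odd (Nat.card f.ker)) {c s u : alternatingGroup (Fin 4)}
    (hs : s ^ 2 = 1) (hsu : s * u = u * s) (hcs : c * s * c⁻¹ = u) (hcu : c * u * c⁻¹ = s * u)
    (hc : c ^ 3 = 1)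
    (hind : ∀ i j : ZMod 2, ∀ k : Fin 3, s ^ i.val * u ^ j.val * c ^ k.val = 1 →
      i = 0 ∧ j = 0 ∧ k = 0)
    (hgen : ∀ g, ∃ i j : Fin 2, ∃ k : Fin 3, s ^ i.val * u ^ j.val * c ^ k.val = g)
    {n : ℕ} [NeZero n] (α : Multiplicative (ZMod n) →* MulAut KleinProd)
    (hα3 : α (Multiplicative.ofAdd 1) ^ 3 = 1) (hα1 : α (Multiplicative.ofAdd 1) ≠ 1)
    {x : G} (hx : x ^ n = 1) (hfx : f x = c) :
    ∃ h : KleinProd ⋊[α] Multiplicative (ZMod n) →* G,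
      (∀ k : ℕ, h (SemidirectProduct.inr (Multiplicative.ofAdd (k : ZMod n))) = x ^ k) ∧
      (∀ v (k : ℕ), f (h ⟨v, Multiplicative.ofAdd (k : ZMod n)⟩) = 1 → v = 1 ∧ 3 ∣ k) ∧
      ∀ g, ∃ p, f (h p) = g := by
  obtain ⟨a, ha2, hfa⟩ : ∃ a : G, a ^ 2 = 1 ∧ f a = s := by
    obtain ⟨g, hg⟩ := hsurj s
    refine ⟨g ^ Nat.card f.ker, ?_, ?_⟩
    · have hz : g ^ 2 ∈ f.ker := by rw [MonoidHom.mem_ker, map_pow, hg, hs]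
      have := pow_card_eq_one' (x := (⟨_, hz⟩ : f.ker))
      rw [← pow_mul, mul_comm, pow_mul]
      exact congrArg Subtype.val this
    · obtain ⟨k, hk⟩ := hodd
      rw [map_pow, hg, hk, pow_succ, pow_mul, hs, one_pow, one_mul]
  have eq_of {u v : G} := eq_of_sq_eq_one_of_map_eq f hcen hodd (u := u) (v := v)
  have hconj (g : G) (hg : g ^ 2 = 1) (y : G) : (y * g * y⁻¹) ^ 2 = 1 := by
    rw [conj_pow, hg, mul_one, mul_inv_cancel]
  have hfb : f (x * a * x⁻¹) = u := by simp [hfx, hfa, hcs]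
  have hb2 := hconj a ha2 x
  have hab : Commute a (x * a * x⁻¹) := by
    have := eq_of (hconj _ hb2 a) hb2 (by
      rw [map_mul, map_mul, map_inv, hfb, hfa, hsu, mul_inv_cancel_right])
    exact mul_inv_eq_iff_eq_mul.1 this
  have hτb : MulAut.conj x (x * a * x⁻¹) = a * (x * a * x⁻¹) := by
    rw [MulAut.conj_apply]
    refine eq_of (hconj _ hb2 x) ?_ ?_
    · rw [hab.mul_pow, ha2, hb2, one_mul]
    · rw [map_mul, map_mul f x, map_inv, hfb, hfx, hcu, map_mul f a, hfb, hfa]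
  obtain ⟨ψ, hψ, hψτ⟩ := exists_kleinHom a (x * a * x⁻¹) ha2 hb2 hab
    (MulAut.conj x).toMonoidHom rfl hτb
  obtain ⟨e, he⟩ := exists_conj_kleinAut _ hα3 hα1
  obtain ⟨φ, hφ⟩ := exists_zmodHom n x hx
  have hone : ∀ v, ψ (e.symm (α (Multiplicative.ofAdd 1) v)) = x * ψ (e.symm v) * x⁻¹ := by
    intro v
    obtain ⟨w, rfl⟩ := e.surjective v
    rw [← he, e.symm_apply_apply, e.symm_apply_apply, hψτ]
    rfl
  have hact : ∀ (k : ℕ) v, ψ (e.symm (α (Multiplicative.ofAdd (k : ZMod n)) v)) =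
      x ^ k * ψ (e.symm v) * (x ^ k)⁻¹ := by
    intro k
    induction k with
    | zero => simp
    | succ k ih =>
      intro v
      rw [Nat.cast_succ, ofAdd_add, map_mul, MulAut.mul_apply, ih, hone]
      group
  let h := SemidirectProduct.lift (φ := α) (ψ.comp e.symm.toMonoidHom) φ (by
    intro k
    obtain ⟨k, rfl⟩ := exists_natCast_zmod k
    ext v
    all_goals
      simp only [MonoidHom.comp_apply, MulEquiv.coe_toMonoidHom, hφ, MulAut.conj_apply]
      exact hact k _)
  have hval : ∀ (i j k : ℕ), f (h ⟨e (Multiplicative.ofAdd (i : ZMod 2),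
      Multiplicative.ofAdd (j : ZMod 2)), Multiplicative.ofAdd (k : ZMod n)⟩) =
      s ^ i * u ^ j * c ^ k := by
    intro i j k
    rw [SemidirectProduct.mk_eq_inl_mul_inr, map_mul, SemidirectProduct.lift_inl,
      SemidirectProduct.lift_inr, hφ, MonoidHom.comp_apply, MulEquiv.coe_toMonoidHom,
      e.symm_apply_apply, hψ]
    simp only [map_mul, map_pow, hfa, hfx, map_inv, hcs]
  refine ⟨h, fun k => ?_, fun v k hvk => ?_, fun g => ?_⟩
  · rw [SemidirectProduct.lift_inr, hφ]
  · obtain ⟨⟨i, j⟩, rfl⟩ := e.surjective v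
    have := hval (Multiplicative.toAdd i).val (Multiplicative.toAdd j).val k
    rw [ZMod.natCast_zmod_val, ZMod.natCast_zmod_val, ofAdd_toAdd, ofAdd_toAdd, hvk,
      pow_eq_pow_mod k hc] at this
    obtain ⟨hi, hj, hk⟩ := hind _ _ ⟨k % 3, Nat.mod_lt _ (by norm_num)⟩ this.symm
    refine ⟨?_, Nat.dvd_of_mod_eq_zero (Fin.ext_iff.1 hk)⟩
    rw [show (i, j) = (1 : KleinProd) from Prod.ext hi hj, map_one]
  · obtain ⟨i, j, k, hg⟩ := hgen g
    exact ⟨_, (hval i j k).trans hg⟩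


/-- Let `m = 3^r · m₊` with `r ≥ 1` and `gcd(m₊, 6) = 1`. Let `G` be a finite
group with a cyclic subgroup `C` of order `m` contained in the center of `G`, such that
`G/C ≅ A₄` (encoded by a surjective homomorphism `f : G →* A₄` with kernel `C`) and `C` has no
complement in `G`. Then `G ≅ ℤ/m₊ × ((ℤ/2 × ℤ/2) ⋊_α ℤ/3^(r+1))`, where
`α : ℤ/3^(r+1) → Aut(ℤ/2 × ℤ/2)` is any homomorphism whose image has order 3. -/
theorem stmt_8 (r mp m : ℕ) (hr : 1 ≤ r) (hmp : Nat.gcd mp 6 = 1) (hm : m = 3 ^ r * mp)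
    (G : Type*) [Group G] [Finite G] (C : Subgroup G)
    (hcyc : IsCyclic C) (hcard : Nat.card C = m) (hcen : C ≤ Subgroup.center G)
    (f : G →* alternatingGroup (Fin 4)) (hsurj : Function.Surjective f) (hker : f.ker = C)
    (hnonsplit : ∀ K : Subgroup G, ¬ C.IsComplement' K)
    (α : Multiplicative (ZMod (3 ^ (r + 1))) →*
      MulAut (Multiplicative (ZMod 2) × Multiplicative (ZMod 2)))
    (hα : Nat.card α.range = 3) :
    Nonempty
      (G ≃* (Multiplicative (ZMod mp) ×
        ((Multiplicative (ZMod 2) × Multiplicative (ZMod 2)) ⋊[α]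
          Multiplicative (ZMod (3 ^ (r + 1)))))) := by
  subst hker
  have hmp0 : mp ≠ 0 := by rintro rfl; norm_num at hmp
  have hmp2 : Nat.Coprime mp 2 := Nat.Coprime.coprime_dvd_right (by norm_num) hmp
  have hmp3 : Nat.Coprime mp 3 := Nat.Coprime.coprime_dvd_right (by norm_num) hmp
  have : NeZero mp := ⟨hmp0⟩
  have hodd : Odd (Nat.card f.ker) := by
    rw [hcard, hm]
    exact (Odd.pow (by decide)).mul (Nat.coprime_two_right.1 hmp2)
  have hα1 : α (Multiplicative.ofAdd 1) ≠ 1 := by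
    intro h
    have : α = 1 := by
      refine MonoidHom.ext fun k => ?_
      obtain ⟨k, rfl⟩ := exists_natCast_zmod k
      rw [← nsmul_one, ofAdd_nsmul, map_pow, h, one_pow, MonoidHom.one_apply]
    subst this
    simp at hα
  have hα3 : α (Multiplicative.ofAdd 1) ^ 3 = 1 := by
    have := pow_card_eq_one' (x := (⟨_, Multiplicative.ofAdd 1, rfl⟩ : α.range))
    rw [hα] at this
    simpa [Subtype.ext_iff] using this
  obtain ⟨c, s, u, hs, hsu, hcs, hcu, hc, hind, hgen⟩ := exists_alternatingGroup_four_generators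
  have lift {x : G} := exists_semidirectHom f hsurj hcen hodd hs hsu hcs hcu hc hind hgen α
    hα3 hα1 (x := x)
  have hcube : ∀ t : G, f t = c → t ^ 3 ≠ 1 := by
    intro t hft ht
    have htn : t ^ 3 ^ (r + 1) = 1 := by rw [pow_succ', pow_mul, ht, one_pow]
    obtain ⟨h, hinr, hone, hsurj'⟩ := lift htn hft
    refine hnonsplit h.range (Subgroup.isComplement'_of_disjoint_and_mul_eq_univ ?_ ?_)
    · rw [Subgroup.disjoint_def]
      rintro _ hg ⟨⟨v, k⟩, rfl⟩
      obtain ⟨k, rfl⟩ := exists_natCast_zmod k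
      obtain ⟨rfl, l, rfl⟩ := hone v k hg
      exact (hinr _).trans (by rw [pow_mul, ht, one_pow])
    · refine Set.eq_univ_of_forall fun g => ?_
      obtain ⟨p, hp⟩ := hsurj' (f g)
      refine Set.mem_mul.2 ⟨g * (h p)⁻¹, ?_, h p, ⟨p, rfl⟩, inv_mul_cancel_right _ _⟩
      simp [MonoidHom.mem_ker, hp]
  obtain ⟨⟨z, hz⟩, hzgen⟩ := hcyc.exists_generator
  have hzord : orderOf z = 3 ^ r * mp := by
    rw [← hm, ← hcard, ← orderOf_eq_card_of_forall_mem_zpowers hzgen, Subgroup.orderOf_mk]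
  have hzpow : ∀ g ∈ f.ker, ∃ k : ℤ, z ^ k = g := by
    intro g hg
    obtain ⟨k, hk⟩ := hzgen ⟨g, hg⟩
    exact ⟨k, congrArg Subtype.val hk⟩
  have hzcomm : ∀ g, Commute z g := fun g => (Subgroup.mem_center_iff.1 (hcen hz) g).symm
  obtain ⟨y, hy⟩ := hsurj c
  have hfx : f (y ^ (mp * mp)) = c := by
    have hmod : mp * mp % 3 = 1 := by
      have : ¬ 3 ∣ mp := fun h => by
        have := Nat.eq_one_of_dvd_coprimes hmp3 h dvd_rfl
        omega
      rcases (by omega : mp % 3 = 1 ∨ mp % 3 = 2) with h | h <;> simp [Nat.mul_mod, h]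
    rw [map_pow, hy, pow_eq_pow_mod _ hc, hmod, pow_one]
  have hker3 : ∀ g, f g = c → g ^ 3 ∈ f.ker := fun g hg => by
    rw [MonoidHom.mem_ker, map_pow, hg, hc]
  have hxn : (y ^ (mp * mp)) ^ 3 ^ (r + 1) = 1 := by
    obtain ⟨k, hk⟩ := hzpow _ (hker3 y hy)
    rw [← pow_mul, show mp * mp * 3 ^ (r + 1) = 3 * ((3 ^ r * mp) * mp) by ring, pow_mul, ← hk,
      ← zpow_natCast, zpow_comm, zpow_natCast, pow_mul, ← hzord, pow_orderOf_eq_one, one_pow,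
      one_zpow]
  generalize y ^ (mp * mp) = x at hfx hxn
  have hxord : orderOf x = 3 ^ (r + 1) := by
    have : Fact (Nat.Prime 3) := ⟨Nat.prime_three⟩
    refine orderOf_eq_prime_pow (fun hxr => ?_) hxn
    obtain ⟨k, hk⟩ := hzpow _ (hker3 x hfx)
    obtain ⟨q, rfl⟩ := Nat.exists_eq_add_of_le' hr
    have h1 : z ^ (k * 3 ^ q : ℤ) = 1 := by
      rw [pow_succ', pow_mul, ← hk, ← zpow_natCast, ← zpow_mul] at hxr
      exact_mod_cast hxr
    rw [← orderOf_dvd_iff_zpow_eq_one, hzord, pow_succ] at h1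
    push_cast at h1
    rw [mul_comm k, mul_assoc] at h1
    obtain ⟨l, rfl⟩ := (dvd_mul_right (3 : ℤ) mp).trans
      (Int.dvd_of_mul_dvd_mul_left (by positivity) h1)
    have hcomm : Commute x (z ^ (-l)) := ((hzcomm x).zpow_left _).symm
    refine hcube (x * z ^ (-l)) ?_ ?_
    · rw [map_mul, map_zpow, MonoidHom.mem_ker.1 hz, one_zpow, mul_one, hfx]
    · rw [hcomm.mul_pow, ← hk, ← zpow_natCast, ← zpow_mul, ← zpow_add]
      convert zpow_zero z using 2
      push_cast
      ring
  obtain ⟨h, hinr, hone, -⟩ := lift hxn hfx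
  have hdord : orderOf (z ^ 3 ^ r) = mp := by
    rw [orderOf_pow_of_dvd (by positivity) (by rw [hzord]; exact dvd_mul_right _ _), hzord,
      Nat.mul_div_cancel_left _ (by positivity)]
  obtain ⟨δ, hδ⟩ := exists_zmodHom mp (z ^ 3 ^ r) (by rw [← hdord, pow_orderOf_eq_one])
  let Φ := δ.noncommCoprod h (by
    intro j p
    obtain ⟨j, rfl⟩ := exists_natCast_zmod j
    rw [hδ]
    exact ((hzcomm _).pow_left _).pow_left _)
  have hinj : Function.Injective Φ := by
    rw [injective_iff_map_eq_one]
    rintro ⟨j, v, k⟩ hp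
    obtain ⟨j, rfl⟩ := exists_natCast_zmod j
    obtain ⟨k, rfl⟩ := exists_natCast_zmod k
    rw [MonoidHom.noncommCoprod_apply, hδ] at hp
    have hf := congrArg f hp
    simp only [map_mul, map_pow, MonoidHom.mem_ker.1 hz, one_pow, one_mul, map_one] at hf
    obtain ⟨rfl, -⟩ := hone v k hf
    change _ * h (SemidirectProduct.inr _) = 1 at hp
    rw [hinr] at hp
    have hxk : x ^ (k * mp) = 1 := by
      rw [pow_mul, eq_inv_of_mul_eq_one_right hp, inv_pow, pow_right_comm, ← hdord,
        pow_orderOf_eq_one, one_pow, inv_one]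
    have hk : 3 ^ (r + 1) ∣ k := by
      rw [← orderOf_dvd_iff_pow_eq_one, hxord] at hxk
      exact (hmp3.symm.pow_left _).dvd_of_dvd_mul_right hxk
    rw [orderOf_dvd_iff_pow_eq_one.1 (hxord ▸ hk : orderOf x ∣ k), mul_one,
      ← orderOf_dvd_iff_pow_eq_one, hdord] at hp
    rw [(ZMod.natCast_eq_zero_iff _ _).2 hk, (ZMod.natCast_eq_zero_iff _ _).2 hp]
    rfl
  have hcardG : Nat.card G = 3 ^ r * mp * 12 := by
    rw [← f.ker.card_mul_index, hcard, hm, Subgroup.index_ker, f.range_eq_top.2 hsurj,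
      Subgroup.card_top, Nat.card_eq_fintype_card,
      show Fintype.card (alternatingGroup (Fin 4)) = 12 by decide +kernel]
  have hbij : Function.Bijective Φ := by
    refine hinj.bijective_of_nat_card_le ?_
    rw [hcardG, Nat.card_prod, SemidirectProduct.card, Nat.card_prod]
    simp only [Nat.card_eq_fintype_card, Fintype.card_multiplicative, ZMod.card]
    apply le_of_eq
    ring
  exact ⟨(MulEquiv.ofBijective Φ hbij).symm⟩
end
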